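/- arXiv:1407.6316 — 2 statements merged into one kernel-verified Lean document; each statement's English description precedes it below -/
import Mathlib

section
/- Let λ be an antidominant composition and for j ≥ 1 let r_j = |{i : λ_i ≥ j}| be the number of boxes in the j-th row of dg'(λ). Then, in ℤ[x_1,…,x_n], the sum of the monomials x^{k(σ)} over all appropriate fillings σ of dg'(λ) equals the product ∏_{j=1}^{λ_n} e_{r_j}(x_1,…,x_n), where e_k denotes the k-th elementary symmetric polynomial in x_1,…,x_n. -/
open Finset

namespace CO

/-- The column diagram `dg'(λ)` of a composition, as a finset of boxes `(i, j)`,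
`1 ≤ i ≤ n`, `1 ≤ j ≤ λ_i`. -/
def dgF (n : ℕ) (lam : ℕ → ℕ) : Finset (ℕ × ℕ) :=
  (Finset.Icc 1 n).biUnion fun i => (Finset.Icc 1 (lam i)).image fun j => (i, j)

/-- The augmented diagram `d̂g(λ)`: one extra box `(i, 0)` below each column. -/
def augF (n : ℕ) (lam : ℕ → ℕ) : Finset (ℕ × ℕ) :=
  dgF n lam ∪ (Finset.Icc 1 n).image fun i => (i, 0)

/-- The box `d(u)` directly below a box. -/
def dbox (u : ℕ × ℕ) : ℕ × ℕ := (u.1, u.2 - 1)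

/-- The augmented filling `σ̂`: equal to `σ` on positive rows and to `i` on `(i, 0)`. -/
def aug (σ : ℕ × ℕ → ℕ) (u : ℕ × ℕ) : ℕ := if u.2 = 0 then u.1 else σ u

/-- A filling takes values in `{1, …, n}` on the diagram. -/
def IsFilling (n : ℕ) (lam : ℕ → ℕ) (σ : ℕ × ℕ → ℕ) : Prop :=
  ∀ u ∈ dgF n lam, 1 ≤ σ u ∧ σ u ≤ n

/-- Attacking boxes: same row, or consecutive rows with the lower box to the right. -/
def Attack (u v : ℕ × ℕ) : Prop :=
  u ≠ v ∧ (u.2 = v.2 ∨ (u.2 = v.2 + 1 ∧ u.1 < v.1) ∨ (v.2 = u.2 + 1 ∧ v.1 < u.1))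

/-- A non-attacking filling: `σ̂` takes distinct values on attacking pairs of the
augmented diagram. -/
def NonAttacking (n : ℕ) (lam : ℕ → ℕ) (σ : ℕ × ℕ → ℕ) : Prop :=
  ∀ u ∈ augF n lam, ∀ v ∈ augF n lam, Attack u v → aug σ u ≠ aug σ v

/-- The arm of a box `u`. -/
def armF (n : ℕ) (lam : ℕ → ℕ) (u : ℕ × ℕ) : Finset (ℕ × ℕ) :=
  ((dgF n lam).filter fun v => v.1 < u.1 ∧ v.2 = u.2 ∧ lam v.1 ≤ lam u.1) ∪
    ((augF n lam).filter fun v => u.1 < v.1 ∧ v.2 + 1 = u.2 ∧ lam v.1 < lam u.1)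

/-- `a(u) = |arm(u)|`. -/
def armCard (n : ℕ) (lam : ℕ → ℕ) (u : ℕ × ℕ) : ℕ := (armF n lam u).card

/-- The number of inversions of `σ̂`: attacking pairs `u, u'` with `σ̂(u) < σ̂(u')`
and (same row with `u` to the left, or `u'` one row above `u` strictly to the left). -/
def invCard (n : ℕ) (lam : ℕ → ℕ) (σ : ℕ × ℕ → ℕ) : ℕ :=
  ((augF n lam ×ˢ augF n lam).filter fun p =>
    aug σ p.1 < aug σ p.2 ∧
      ((p.1.2 = p.2.2 ∧ p.1.1 < p.2.1) ∨ (p.2.2 = p.1.2 + 1 ∧ p.2.1 < p.1.1))).card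

/-- The descent set of `σ̂`. -/
def desF (n : ℕ) (lam : ℕ → ℕ) (σ : ℕ × ℕ → ℕ) : Finset (ℕ × ℕ) :=
  (dgF n lam).filter fun u => aug σ (dbox u) < aug σ u

/-- The statistic `coinv(σ̂)` (as an integer). -/
def coinv (n : ℕ) (lam : ℕ → ℕ) (σ : ℕ × ℕ → ℕ) : ℤ :=
  (∑ u ∈ dgF n lam, (armCard n lam u : ℤ)) - invCard n lam σ +
    (((Finset.Icc 1 n ×ˢ Finset.Icc 1 n).filter fun p =>
      p.1 < p.2 ∧ lam p.1 ≤ lam p.2).card : ℤ) +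
    ∑ u ∈ desF n lam σ, (armCard n lam u : ℤ)

/-- The statistic `T(σ)`. -/
def Tstat (n : ℕ) (lam : ℕ → ℕ) (σ : ℕ × ℕ → ℕ) : ℤ :=
  coinv n lam σ -
    ∑ u ∈ (dgF n lam).filter fun u => aug σ u ≠ aug σ (dbox u), (armCard n lam u : ℤ)

/-- Antidominant composition: `λ_1 ≤ ⋯ ≤ λ_n`. -/
def Antidominant (n : ℕ) (lam : ℕ → ℕ) : Prop :=
  ∀ i j, 1 ≤ i → i ≤ j → j ≤ n → lam i ≤ lam j

/-- Appropriate filling: non-attacking with `T(σ) = 0`. -/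
def Appropriate (n : ℕ) (lam : ℕ → ℕ) (σ : ℕ × ℕ → ℕ) : Prop :=
  IsFilling n lam σ ∧ NonAttacking n lam σ ∧ Tstat n lam σ = 0

/-- The operation `π` on compositions: `π(λ) = (λ_n + 1, λ_1, …, λ_{n-1})`. -/
def piComp (n : ℕ) (lam : ℕ → ℕ) : ℕ → ℕ :=
  fun i => if i = 1 then lam n + 1 else lam (i - 1)

/-- The operation `π` on boxes. -/
def piBox (n : ℕ) (u : ℕ × ℕ) : ℕ × ℕ :=
  if u.1 < n then (u.1 + 1, u.2) else (1, u.2 + 1)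

/-- Extension by zero of a function defined on the diagram. -/
def ext (n : ℕ) (lam : ℕ → ℕ) (f : {u // u ∈ dgF n lam} → ℕ) : ℕ × ℕ → ℕ :=
  fun u => if h : u ∈ dgF n lam then f ⟨u, h⟩ else 0

/-- `qstat(σ) = Σ (l(u) + 1)` over boxes `u` with `σ̂(u) < σ̂(d(u))`. -/
def qstat (n : ℕ) (lam : ℕ → ℕ) (σ : ℕ × ℕ → ℕ) : ℕ :=
  ∑ u ∈ (dgF n lam).filter fun u => aug σ u < aug σ (dbox u), (lam u.1 - u.2 + 1)

end CO

namespace CO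

lemma mem_dgF' {n : ℕ} {lam : ℕ → ℕ} {u : ℕ × ℕ} :
    u ∈ dgF n lam ↔ (1 ≤ u.1 ∧ u.1 ≤ n) ∧ 1 ≤ u.2 ∧ u.2 ≤ lam u.1 := by
  obtain ⟨i, j⟩ := u
  simp only [dgF, Finset.mem_biUnion, Finset.mem_Icc, Finset.mem_image, Prod.mk.injEq]
  constructor
  · rintro ⟨a, ha, b, hb, rfl, rfl⟩
    exact ⟨ha, hb⟩
  · rintro ⟨ha, hb⟩
    exact ⟨i, ha, j, hb, rfl, rfl⟩

lemma mem_augF' {n : ℕ} {lam : ℕ → ℕ} {u : ℕ × ℕ} :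
    u ∈ augF n lam ↔ (1 ≤ u.1 ∧ u.1 ≤ n) ∧ u.2 ≤ lam u.1 := by
  obtain ⟨i, j⟩ := u
  simp only [augF, Finset.mem_union, mem_dgF', Finset.mem_Icc, Finset.mem_image, Prod.mk.injEq]
  constructor
  · rintro (h | ⟨a, ha, rfl, rfl⟩)
    · exact ⟨h.1, h.2.2⟩
    · exact ⟨ha, Nat.zero_le _⟩
  · rintro ⟨ha, hb⟩
    rcases Nat.eq_zero_or_pos j with h | h
    · exact Or.inr ⟨i, ha, rfl, h.symm⟩
    · exact Or.inl ⟨ha, h, hb⟩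

/-- Cyclic distance from `b` up to `a` in `{1, …, n}`. -/
def cyc (n b a : ℕ) : ℤ := if b ≤ a then (a : ℤ) - b else (a : ℤ) - b + n

lemma cyc_injOn (n b : ℕ) : Set.InjOn (cyc n b) (Finset.Icc 1 n : Finset ℕ) := by
  intro a ha c hc h
  simp only [Finset.coe_Icc, Set.mem_Icc] at ha hc
  unfold cyc at h
  split_ifs at h <;> omega

lemma term_iff {n a b c : ℕ} (ha : 1 ≤ a ∧ a ≤ n) (hb : 1 ≤ b ∧ b ≤ n) (hc : 1 ≤ c ∧ c ≤ n) :
    ((c ≠ a ∧ c ≠ b) ∧ ((if b ≤ a then 1 else 0 : ℤ) - (if c < a then 1 else 0)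
      - (if b < c then 1 else 0)) = 0) ↔ cyc n b a < cyc n b c := by
  unfold cyc
  split_ifs <;> omega

lemma term_nonpos {a b c : ℕ} (h1 : c ≠ a) (h2 : c ≠ b) :
    ((if b ≤ a then 1 else 0 : ℤ) - (if c < a then 1 else 0)
      - (if b < c then 1 else 0)) ≤ 0 := by
  split_ifs <;> omega

/-- Pairs `(v, u)` of boxes in the same row, `v` to the left of `u`. -/
def pairsQ (n : ℕ) (lam : ℕ → ℕ) : Finset ((ℕ × ℕ) × (ℕ × ℕ)) :=
  (dgF n lam ×ˢ dgF n lam).filter fun p => p.1.2 = p.2.2 ∧ p.1.1 < p.2.1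

lemma armCard_eq {n : ℕ} {lam : ℕ → ℕ} (hanti : Antidominant n lam) {u : ℕ × ℕ}
    (hu : u ∈ dgF n lam) :
    armCard n lam u = ((dgF n lam).filter fun v => v.2 = u.2 ∧ v.1 < u.1).card := by
  unfold armCard armF
  congr 1
  ext v
  simp only [Finset.mem_union, Finset.mem_filter]
  rw [mem_dgF'] at hu
  constructor
  · rintro (⟨h1, h2, h3, h4⟩ | ⟨h1, h2, h3, h4⟩)
    · exact ⟨h1, h3, h2⟩
    · rw [mem_augF'] at h1
      have := hanti u.1 v.1 hu.1.1 h2.le h1.1.2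
      omega
  · rintro ⟨h1, h2, h3⟩
    have h1' := mem_dgF'.1 h1
    exact Or.inl ⟨h1, h3, h2, hanti _ _ h1'.1.1 h3.le hu.1.2⟩

lemma sum_pairsQ {n : ℕ} {lam : ℕ → ℕ} (F : (ℕ × ℕ) → (ℕ × ℕ) → ℤ) :
    ∑ p ∈ pairsQ n lam, F p.1 p.2 =
      ∑ u ∈ dgF n lam, ∑ v ∈ (dgF n lam).filter (fun v => v.2 = u.2 ∧ v.1 < u.1), F v u := by
  unfold pairsQ
  rw [Finset.sum_filter, Finset.sum_product_right]
  refine Finset.sum_congr rfl fun u _ => ?_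
  rw [Finset.sum_filter]

lemma inv_eq {n : ℕ} {lam : ℕ → ℕ} (hanti : Antidominant n lam) (σ : ℕ × ℕ → ℕ) :
    (invCard n lam σ) = ((Finset.Icc 1 n ×ˢ Finset.Icc 1 n).filter fun p =>
      p.1 < p.2 ∧ lam p.1 ≤ lam p.2).card
      + ((pairsQ n lam).filter fun p => aug σ p.1 < aug σ p.2).card
      + ((pairsQ n lam).filter fun p => aug σ (dbox p.2) < aug σ p.1).card := by
  let e0 : ℕ × ℕ → (ℕ × ℕ) × (ℕ × ℕ) := fun p => ((p.1, 0), (p.2, 0))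
  let e1 : (ℕ × ℕ) × (ℕ × ℕ) → (ℕ × ℕ) × (ℕ × ℕ) := fun p => (dbox p.2, p.1)
  have h0 : ((Finset.Icc 1 n ×ˢ Finset.Icc 1 n).filter fun p =>
      p.1 < p.2 ∧ lam p.1 ≤ lam p.2).card = (((Finset.Icc 1 n ×ˢ Finset.Icc 1 n).filter fun p =>
      p.1 < p.2 ∧ lam p.1 ≤ lam p.2).image e0).card := by
    rw [Finset.card_image_of_injective]
    rintro ⟨a, b⟩ ⟨c, d⟩ h
    simpa [e0] using h
  have h1 : ((pairsQ n lam).filter fun p => aug σ (dbox p.2) < aug σ p.1).card =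
      (((pairsQ n lam).filter fun p => aug σ (dbox p.2) < aug σ p.1).image e1).card := by
    rw [Finset.card_image_of_injOn]
    rintro ⟨⟨a, b⟩, ⟨c, d⟩⟩ h ⟨⟨a', b'⟩, ⟨c', d'⟩⟩ h' he
    simp only [Finset.coe_filter, pairsQ, Finset.mem_filter, Finset.mem_product, mem_dgF',
      Set.mem_ofPred_eq] at h h'
    simp only [e1, dbox, Prod.mk.injEq] at he ⊢
    omega
  rw [h0, h1, ← Finset.card_union_of_disjoint, ← Finset.card_union_of_disjoint]
  · unfold invCard
    congr 1
    ext ⟨⟨a, b⟩, ⟨c, d⟩⟩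
    simp only [Finset.mem_filter, Finset.mem_union, Finset.mem_image, Finset.mem_product,
      mem_augF', pairsQ, mem_dgF', Prod.exists, Finset.mem_Icc]
    constructor
    · rintro ⟨⟨hm1, hm2⟩, hlt, (⟨hr, hc⟩ | ⟨hr, hc⟩)⟩
      · left
        rcases Nat.eq_zero_or_pos b with hb | hb
        · left
          subst hb
          subst hr
          exact ⟨a, c, ⟨⟨hm1.1, hm2.1⟩, hc, hanti _ _ hm1.1.1 hc.le hm2.1.2⟩, rfl⟩
        · right
          subst hr
          exact ⟨⟨⟨⟨hm1.1, hb, hm1.2⟩, hm2.1, hb, hm2.2⟩, rfl, hc⟩, hlt⟩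
      · right
        have := hanti c a hm2.1.1 (le_of_lt hc) hm1.1.2
        subst hr
        refine ⟨c, b + 1, a, b + 1, ⟨⟨⟨⟨hm2.1, ?_, hm2.2⟩, hm1.1, ?_, ?_⟩, rfl, hc⟩, ?_⟩, rfl⟩
        · simp
        · simp
        · exact hm2.2.trans this
        · simpa [dbox] using hlt
    · rintro ((⟨i, j, ⟨⟨h1, h2⟩, h3, h4⟩, he⟩ | ⟨⟨⟨h1, h2⟩, h3, h4⟩, h5⟩) |
        ⟨i, j, k, l, ⟨⟨⟨h1, h2⟩, h3, h4⟩, h5⟩, he⟩)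
      · simp only [e0, Prod.mk.injEq] at he
        obtain ⟨⟨rfl, rfl⟩, rfl, rfl⟩ := he
        exact ⟨⟨⟨h1, Nat.zero_le _⟩, h2, Nat.zero_le _⟩, by simpa [aug] using h3, Or.inl ⟨rfl, h3⟩⟩
      · exact ⟨⟨⟨h1.1, h1.2.2⟩, h2.1, h2.2.2⟩, h5, Or.inl ⟨h3, h4⟩⟩
      · simp only [e1, dbox, Prod.mk.injEq] at he h5 h3 h4 h1 h2
        obtain ⟨⟨rfl, rfl⟩, rfl, rfl⟩ := he
        refine ⟨⟨⟨h2.1, ?_⟩, h1.1, h1.2.2⟩, h5, Or.inr ⟨?_, h4⟩⟩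
        · omega
        · omega
  · rw [Finset.disjoint_left]
    rintro ⟨⟨a, b⟩, ⟨c, d⟩⟩ h h'
    simp only [Finset.mem_filter, Finset.mem_union, Finset.mem_image, Finset.mem_product,
      pairsQ, mem_dgF', Prod.exists, e0, e1, Prod.mk.injEq] at h h'
    obtain ⟨i, j, k, l, h', he⟩ := h'
    simp only [dbox, Prod.mk.injEq] at he
    rcases h with ⟨i', j', h, he'⟩ | h <;> omega
  · rw [Finset.disjoint_left]
    rintro ⟨⟨a, b⟩, ⟨c, d⟩⟩ h h'
    simp only [Finset.mem_filter, Finset.mem_image, Finset.mem_product,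
      pairsQ, mem_dgF', Prod.exists, e0, Prod.mk.injEq] at h h'
    obtain ⟨i, j, h, he⟩ := h
    omega

lemma Tstat_eq {n : ℕ} {lam : ℕ → ℕ} (hanti : Antidominant n lam) (σ : ℕ × ℕ → ℕ) :
    Tstat n lam σ = ∑ p ∈ pairsQ n lam,
      ((if aug σ (dbox p.2) ≤ aug σ p.2 then 1 else 0 : ℤ)
        - (if aug σ p.1 < aug σ p.2 then 1 else 0)
        - (if aug σ (dbox p.2) < aug σ p.1 then 1 else 0)) := by
  have hA : ∑ p ∈ pairsQ n lam, (if aug σ (dbox p.2) ≤ aug σ p.2 then 1 else 0 : ℤ) =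
      ∑ u ∈ dgF n lam, (if aug σ (dbox u) ≤ aug σ u then (armCard n lam u : ℤ) else 0) := by
    rw [sum_pairsQ (fun v u => (if aug σ (dbox u) ≤ aug σ u then 1 else 0 : ℤ))]
    refine Finset.sum_congr rfl fun u hu => ?_
    rw [armCard_eq hanti hu]
    split_ifs <;> simp
  rw [Finset.sum_sub_distrib, Finset.sum_sub_distrib, hA]
  unfold Tstat coinv desF
  rw [inv_eq hanti σ]
  simp only [Finset.sum_boole]
  rw [Finset.sum_filter, Finset.sum_filter]
  have key : (∑ u ∈ dgF n lam, (if aug σ (dbox u) ≤ aug σ u then (armCard n lam u : ℤ) else 0))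
      = ∑ u ∈ dgF n lam, (armCard n lam u : ℤ)
        + (∑ u ∈ dgF n lam, if aug σ (dbox u) < aug σ u then (armCard n lam u : ℤ) else 0)
        - (∑ u ∈ dgF n lam, if aug σ u ≠ aug σ (dbox u) then (armCard n lam u : ℤ) else 0) := by
    rw [← Finset.sum_add_distrib, ← Finset.sum_sub_distrib]
    refine Finset.sum_congr rfl fun u hu => ?_
    split_ifs <;> omega
  rw [key]
  push_cast
  ring

lemma aug_range {n : ℕ} {lam : ℕ → ℕ} {σ : ℕ × ℕ → ℕ} (hσ : IsFilling n lam σ) {u : ℕ × ℕ}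
    (hu : u ∈ augF n lam) : 1 ≤ aug σ u ∧ aug σ u ≤ n := by
  rw [mem_augF'] at hu
  unfold aug
  split_ifs with h
  · exact hu.1
  · exact hσ u (mem_dgF'.2 ⟨hu.1, by omega, hu.2⟩)

/-- The row condition. -/
def RowCond (n : ℕ) (lam : ℕ → ℕ) (σ : ℕ × ℕ → ℕ) : Prop :=
  ∀ p ∈ pairsQ n lam, cyc n (aug σ (dbox p.2)) (aug σ p.2) < cyc n (aug σ (dbox p.2)) (aug σ p.1)

lemma appropriate_iff {n : ℕ} {lam : ℕ → ℕ} (hanti : Antidominant n lam) (σ : ℕ × ℕ → ℕ) :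
    Appropriate n lam σ ↔ IsFilling n lam σ ∧ RowCond n lam σ := by
  unfold Appropriate
  refine and_congr_right fun hσ => ?_
  have hmem : ∀ p ∈ pairsQ n lam, p.1 ∈ augF n lam ∧ p.2 ∈ augF n lam ∧ dbox p.2 ∈ augF n lam ∧
      Attack p.1 p.2 ∧ Attack p.1 (dbox p.2) := by
    rintro ⟨⟨a, b⟩, ⟨c, d⟩⟩ hp
    simp only [pairsQ, Finset.mem_filter, Finset.mem_product, mem_dgF'] at hp
    simp only [mem_augF', dbox, Attack, ne_eq, Prod.mk.injEq]
    have : d - 1 ≤ lam c := by omega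
    omega
  rw [Tstat_eq hanti]
  constructor
  · rintro ⟨hna, hT⟩ p hp
    have hle : ∀ p ∈ pairsQ n lam, ((if aug σ (dbox p.2) ≤ aug σ p.2 then 1 else 0 : ℤ)
        - (if aug σ p.1 < aug σ p.2 then 1 else 0)
        - (if aug σ (dbox p.2) < aug σ p.1 then 1 else 0)) ≤ 0 := by
      intro p hp
      obtain ⟨h1, h2, h3, h4, h5⟩ := hmem p hp
      exact term_nonpos (hna _ h1 _ h2 h4) (hna _ h1 _ h3 h5)
    obtain ⟨h1, h2, h3, h4, h5⟩ := hmem p hp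
    rw [← term_iff (aug_range hσ h2) (aug_range hσ h3) (aug_range hσ h1)]
    exact ⟨⟨hna _ h1 _ h2 h4, hna _ h1 _ h3 h5⟩, (Finset.sum_eq_zero_iff_of_nonpos hle).1 hT p hp⟩
  · intro hR
    have hR' : ∀ p ∈ pairsQ n lam, _ := fun p hp => (term_iff (aug_range hσ (hmem p hp).2.1)
      (aug_range hσ (hmem p hp).2.2.1) (aug_range hσ (hmem p hp).1)).2 (hR p hp)
    refine ⟨?_, Finset.sum_eq_zero fun p hp => (hR' p hp).2⟩
    have hsame : ∀ u ∈ augF n lam, ∀ v ∈ augF n lam, u.2 = v.2 → u.1 < v.1 → aug σ u ≠ aug σ v := by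
      intro u hu v hv h1 h2
      rw [mem_augF'] at hu hv
      rcases Nat.eq_zero_or_pos u.2 with h | h
      · have h' : v.2 = 0 := h1 ▸ h
        simp only [aug, h, h', if_true]
        omega
      · refine (hR' (u, v) ?_).1.1
        simp only [pairsQ, Finset.mem_filter, Finset.mem_product, mem_dgF']
        omega
    have hup : ∀ u ∈ augF n lam, ∀ v ∈ augF n lam, u.2 = v.2 + 1 → u.1 < v.1 →
        aug σ u ≠ aug σ v := by
      intro u hu v hv h1 h2
      rw [mem_augF'] at hu hv
      have := hanti u.1 v.1 hu.1.1 h2.le hv.1.2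
      have := (hR' (u, (v.1, v.2 + 1)) (by
        simp only [pairsQ, Finset.mem_filter, Finset.mem_product, mem_dgF']
        omega)).1.2
      simpa [dbox] using this
    rintro u hu v hv ⟨hne, h | h | h⟩
    · rcases lt_trichotomy u.1 v.1 with h' | h' | h'
      · exact hsame u hu v hv h h'
      · exact absurd (Prod.ext h' h) hne
      · exact (hsame v hv u hu h.symm h').symm
    · exact hup u hu v hv h.1 h.2
    · exact (hup v hv u hu h.1 h.2).symm

lemma row_exists (R : Finset ℕ) (D : ℕ → ℕ → ℤ) : ∀ S : Finset ℕ,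
    (∀ i, Set.InjOn (D i) S) → R.card = S.card →
    ∃ a : ℕ → ℕ, R.image a = S ∧ ∀ i ∈ R, ∀ i' ∈ R, i' < i → D i (a i) < D i (a i') := by
  induction R using Finset.induction_on_max with
  | empty =>
    intro S _ hc
    refine ⟨id, ?_, by simp⟩
    simp only [Finset.card_empty] at hc
    rw [Finset.card_eq_zero.1 hc.symm]
    simp
  | insert m R hm ih =>
    intro S hD hc
    have hmR : m ∉ R := fun h => lt_irrefl _ (hm m h)
    rw [Finset.card_insert_of_notMem hmR] at hc
    have hne : S.Nonempty := by
      rw [← Finset.card_pos]; omega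
    obtain ⟨s, hs, hmin⟩ := Finset.exists_min_image S (D m) hne
    obtain ⟨a, ha, ha'⟩ := ih (S.erase s)
      (fun i => (hD i).mono (by simp)) (by
        rw [Finset.card_erase_of_mem hs]; omega)
    have hup : ∀ i ∈ R, Function.update a m s i = a i := fun i hi =>
      Function.update_of_ne (fun h : i = m => hmR (h ▸ hi)) _ _
    refine ⟨Function.update a m s, ?_, ?_⟩
    · rw [Finset.image_insert, Function.update_self, Finset.image_congr (g := a) (fun i hi => hup i hi),
        ha, Finset.insert_erase hs]
    · intro i hi i' hi' hlt
      rcases Finset.mem_insert.1 hi with rfl | hiR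
      · rcases Finset.mem_insert.1 hi' with rfl | hi'
        · exact absurd hlt (lt_irrefl _)
        · rw [Function.update_self, hup i' hi']
          have hmem : a i' ∈ S.erase s := ha ▸ Finset.mem_image_of_mem a hi'
          refine lt_of_le_of_ne (hmin _ (Finset.mem_of_mem_erase hmem)) fun h => ?_
          exact Finset.ne_of_mem_erase hmem (hD i hs (Finset.mem_of_mem_erase hmem) h).symm
      · rcases Finset.mem_insert.1 hi' with rfl | hi'
        · exact absurd (hm i hiR) (not_lt.2 hlt.le)
        · rw [hup i hiR, hup i' hi']
          exact ha' i hiR i' hi' hlt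

lemma row_inj {R : Finset ℕ} {D : ℕ → ℕ → ℤ} {a : ℕ → ℕ}
    (h : ∀ i ∈ R, ∀ i' ∈ R, i' < i → D i (a i) < D i (a i')) : Set.InjOn a R := by
  intro i hi j hj hij
  rcases lt_trichotomy i j with h' | h' | h'
  · have := h j hj i hi h'
    rw [hij] at this
    exact absurd this (lt_irrefl _)
  · exact h'
  · have := h i hi j hj h'
    rw [hij] at this
    exact absurd this (lt_irrefl _)

lemma row_unique (R : Finset ℕ) (D : ℕ → ℕ → ℤ) (a b : ℕ → ℕ) :
    (∀ i ∈ R, ∀ i' ∈ R, i' < i → D i (a i) < D i (a i')) →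
    (∀ i ∈ R, ∀ i' ∈ R, i' < i → D i (b i) < D i (b i')) →
    R.image a = R.image b → ∀ i ∈ R, a i = b i := by
  induction R using Finset.induction_on_max with
  | empty => simp
  | insert m R hm ih =>
    intro ha hb hI
    have hmR : m ∉ R := fun h => lt_irrefl _ (hm m h)
    have hmm := Finset.mem_insert_self m R
    have hab : a m = b m := by
      have h1 : a m ∈ (insert m R).image b := hI ▸ Finset.mem_image_of_mem a hmm
      have h2 : b m ∈ (insert m R).image a := hI ▸ Finset.mem_image_of_mem b hmm
      obtain ⟨k, hk, hk'⟩ := Finset.mem_image.1 h1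
      obtain ⟨l, hl, hl'⟩ := Finset.mem_image.1 h2
      rcases Finset.mem_insert.1 hk with rfl | hkR
      · exact hk'.symm
      rcases Finset.mem_insert.1 hl with rfl | hlR
      · exact hl'
      have h3 := hb m hmm k hk (hm k hkR)
      have h4 := ha m hmm l hl (hm l hlR)
      rw [hk'] at h3
      rw [hl'] at h4
      exact absurd h3 (not_lt.2 h4.le)
    have key : ∀ c : ℕ → ℕ, (∀ i ∈ insert m R, ∀ i' ∈ insert m R, i' < i → D i (c i) < D i (c i')) →
        R.image c = ((insert m R).image c).erase (c m) := by
      intro c hc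
      rw [Finset.image_insert, Finset.erase_insert]
      intro hmem
      obtain ⟨k, hk, hk'⟩ := Finset.mem_image.1 hmem
      have := row_inj hc (Finset.mem_insert_of_mem hk) hmm hk'
      exact hmR (this ▸ hk)
    intro i hi
    rcases Finset.mem_insert.1 hi with rfl | hi
    · exact hab
    · refine ih (fun i hi i' hi' => ha i (Finset.mem_insert_of_mem hi) i' (Finset.mem_insert_of_mem hi'))
        (fun i hi i' hi' => hb i (Finset.mem_insert_of_mem hi) i' (Finset.mem_insert_of_mem hi')) ?_ i hi
      rw [key a ha, key b hb, hI, hab]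

/-- Columns present in row `j`. -/
def rowF (n : ℕ) (lam : ℕ → ℕ) (j : ℕ) : Finset ℕ := (Finset.Icc 1 n).filter fun i => j ≤ lam i

lemma mem_rowF {n : ℕ} {lam : ℕ → ℕ} {i j : ℕ} :
    i ∈ rowF n lam j ↔ (1 ≤ i ∧ i ≤ n) ∧ j ≤ lam i := by
  simp [rowF]

lemma rowCond_iff {n : ℕ} {lam : ℕ → ℕ} {σ : ℕ × ℕ → ℕ} :
    RowCond n lam σ ↔ ∀ j, ∀ i ∈ rowF n lam (j + 1), ∀ i' ∈ rowF n lam (j + 1), i' < i →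
      cyc n (aug σ (i, j)) (σ (i, j + 1)) < cyc n (aug σ (i, j)) (σ (i', j + 1)) := by
  constructor
  · intro h j i hi i' hi' hlt
    rw [mem_rowF] at hi hi'
    have := h ((i', j + 1), (i, j + 1)) (by
      simp only [pairsQ, Finset.mem_filter, Finset.mem_product, mem_dgF', true_and]
      omega)
    simpa [dbox, aug] using this
  · rintro h ⟨⟨a, b⟩, ⟨c, d⟩⟩ hp
    simp only [pairsQ, Finset.mem_filter, Finset.mem_product, mem_dgF'] at hp
    obtain ⟨⟨h1, h2⟩, h3, h4⟩ := hp
    subst h3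
    obtain ⟨j, rfl⟩ : ∃ j, b = j + 1 := ⟨b - 1, by omega⟩
    have := h j c (mem_rowF.2 ⟨h2.1, h2.2.2⟩) a (mem_rowF.2 ⟨h1.1, h1.2.2⟩) h4
    simpa [dbox, aug] using this

lemma sigma_unique {n : ℕ} {lam : ℕ → ℕ} {σ τ : ℕ × ℕ → ℕ}
    (hσ : RowCond n lam σ) (hτ : RowCond n lam τ)
    (himg : ∀ j, (rowF n lam (j + 1)).image (fun i => σ (i, j + 1)) =
      (rowF n lam (j + 1)).image (fun i => τ (i, j + 1))) :
    ∀ j, ∀ i ∈ rowF n lam j, aug σ (i, j) = aug τ (i, j) := by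
  rw [rowCond_iff] at hσ hτ
  intro j
  induction j with
  | zero => intro i _; simp [aug]
  | succ j ih =>
    intro i hi
    have := row_unique (rowF n lam (j + 1)) (fun i => cyc n (aug σ (i, j)))
      (fun i => σ (i, j + 1)) (fun i => τ (i, j + 1)) (hσ j) (by
        intro i hi i' hi' hlt
        have hi0 : i ∈ rowF n lam j := by rw [mem_rowF] at hi ⊢; omega
        simp only [ih i hi0]
        exact hτ j i hi i' hi' hlt) (himg j) i hi
    simpa [aug] using this

lemma sigma_exists (n : ℕ) (lam : ℕ → ℕ) (S : ℕ → Finset ℕ)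
    (hS : ∀ j, S (j + 1) ⊆ Finset.Icc 1 n ∧ (rowF n lam (j + 1)).card = (S (j + 1)).card) :
    ∃ σ : ℕ × ℕ → ℕ, RowCond n lam σ ∧
      ∀ j, (rowF n lam (j + 1)).image (fun i => σ (i, j + 1)) = S (j + 1) := by
  have hex : ∀ (j : ℕ) (b : ℕ → ℕ), ∃ a : ℕ → ℕ, (rowF n lam (j + 1)).image a = S (j + 1) ∧
      ∀ i ∈ rowF n lam (j + 1), ∀ i' ∈ rowF n lam (j + 1), i' < i →
        cyc n (b i) (a i) < cyc n (b i) (a i') := fun j b =>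
    row_exists (rowF n lam (j + 1)) (fun i => cyc n (b i)) (S (j + 1))
      (fun i => (cyc_injOn n (b i)).mono (by exact_mod_cast (hS j).1)) (hS j).2
  choose nxt h1 h2 using hex
  let rows : ℕ → ℕ → ℕ := fun j => Nat.rec (fun i => i) (fun j b => nxt j b) j
  have haug : ∀ i j, aug (fun u => rows u.2 u.1) (i, j) = rows j i := by
    intro i j
    unfold aug
    split_ifs with h
    · simp only at h
      subst h
      rfl
    · rfl
  refine ⟨fun u => rows u.2 u.1, ?_, fun j => h1 j (rows j)⟩
  rw [rowCond_iff]
  intro j i hi i' hi' hlt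
  rw [haug]
  exact h2 j (rows j) i hi i' hi' hlt

lemma prod_dgF {M : Type*} [CommMonoid M] {n : ℕ} (hn : 1 ≤ n) {lam : ℕ → ℕ}
    (hanti : Antidominant n lam) (g : ℕ × ℕ → M) :
    ∏ u ∈ dgF n lam, g u = ∏ j ∈ Finset.Icc 1 (lam n), ∏ i ∈ rowF n lam j, g (i, j) := by
  rw [Finset.prod_sigma']
  refine Finset.prod_bij' (fun u _ => ⟨u.2, u.1⟩) (fun s _ => (s.2, s.1)) ?_ ?_ ?_ ?_ ?_
  · intro u hu
    rw [mem_dgF'] at hu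
    have := hanti u.1 n hu.1.1 hu.1.2 le_rfl
    simp only [Finset.mem_sigma, Finset.mem_Icc, mem_rowF]
    omega
  · rintro ⟨j, i⟩ h
    simp only [Finset.mem_sigma, Finset.mem_Icc, mem_rowF] at h
    rw [mem_dgF']
    exact ⟨h.2.1, h.1.1, h.2.2⟩
  · intro u _; rfl
  · intro u _; rfl
  · intro u _; rfl

open Classical in
lemma main_sum {M : Type*} [CommRing M] (n : ℕ) (hn : 1 ≤ n) (lam : ℕ → ℕ)
    (hanti : Antidominant n lam) (y : ℕ → M) :
    ∑ f ∈ (Fintype.piFinset fun _ : {u // u ∈ dgF n lam} => Finset.Icc 1 n).filter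
        (fun f => Appropriate n lam (ext n lam f)), ∏ u ∈ dgF n lam, y (ext n lam f u)
    = ∏ j ∈ Finset.Icc 1 (lam n),
        ∑ S ∈ Finset.powersetCard (rowF n lam j).card (Finset.Icc 1 n), ∏ k ∈ S, y k := by
  rw [Finset.prod_sum]
  have hrow : ∀ {i j : ℕ}, j ∈ Finset.Icc 1 (lam n) → i ∈ rowF n lam j → (i, j) ∈ dgF n lam := by
    intro i j hj hi
    rw [mem_rowF] at hi
    exact mem_dgF'.2 ⟨hi.1, (Finset.mem_Icc.1 hj).1, hi.2⟩
  have hempty : ∀ j, lam n < j → rowF n lam j = ∅ := by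
    intro j hj
    rw [Finset.eq_empty_iff_forall_notMem]
    intro i hi
    rw [mem_rowF] at hi
    have := hanti i n hi.1.1 hi.1.2 le_rfl
    omega
  have hinj : ∀ f : {u // u ∈ dgF n lam} → ℕ, RowCond n lam (ext n lam f) →
      ∀ j, Set.InjOn (fun i => ext n lam f (i, j + 1)) (rowF n lam (j + 1)) := by
    intro f hf j
    exact row_inj (D := fun i => cyc n (aug (ext n lam f) (i, j))) (rowCond_iff.1 hf j)
  refine Finset.sum_bij (fun f _ => fun j _ => (rowF n lam j).image (fun i => ext n lam f (i, j)))
    ?_ ?_ ?_ ?_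
  · intro f hf
    rw [Finset.mem_filter, appropriate_iff hanti] at hf
    rw [Finset.mem_pi]
    intro j hj
    rw [Finset.mem_powersetCard]
    constructor
    · intro k hk
      obtain ⟨i, hi, rfl⟩ := Finset.mem_image.1 hk
      exact Finset.mem_Icc.2 (hf.2.1 _ (hrow hj hi))
    · obtain ⟨j, rfl⟩ : ∃ k, j = k + 1 := ⟨j - 1, by have := (Finset.mem_Icc.1 hj).1; omega⟩
      exact Finset.card_image_of_injOn (hinj f hf.2.2 j)
  · intro f hf g hg hfg
    rw [Finset.mem_filter, appropriate_iff hanti] at hf hg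
    have hu := sigma_unique hf.2.2 hg.2.2 (by
      intro j
      by_cases hj : j + 1 ∈ Finset.Icc 1 (lam n)
      · exact congrFun (congrFun hfg (j + 1)) hj
      · rw [hempty (j + 1) (by rw [Finset.mem_Icc] at hj; omega)]
        simp)
    funext ⟨⟨i, j⟩, hu'⟩
    have hu'' := mem_dgF'.1 hu'
    have := hu j i (mem_rowF.2 ⟨hu''.1, hu''.2.2⟩)
    have hj : j ≠ 0 := by have := hu''.2.1; simp only at this; omega
    simpa [aug, hj, ext, hu'] using this
  · intro p hp
    rw [Finset.mem_pi] at hp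
    obtain ⟨σ, hσ, hI⟩ := sigma_exists n lam
      (fun j => if hj : j ∈ Finset.Icc 1 (lam n) then p j hj else ∅) (by
        intro j
        by_cases hj : j + 1 ∈ Finset.Icc 1 (lam n)
        · have := Finset.mem_powersetCard.1 (hp _ hj)
          simp only [hj, dif_pos]
          exact ⟨this.1, this.2.symm⟩
        · simp only [hj, dif_neg, not_false_eq_true]
          rw [hempty (j + 1) (by rw [Finset.mem_Icc] at hj; omega)]
          simp)
    have hext : ∀ u ∈ dgF n lam, ext n lam (fun u => σ u.1) u = σ u := by
      intro u hu
      simp [ext, hu]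
    have hrow' : ∀ {i j : ℕ}, i ∈ rowF n lam (j + 1) → (i, j + 1) ∈ dgF n lam := by
      intro i j hi
      rw [mem_rowF] at hi
      exact mem_dgF'.2 ⟨hi.1, by simp, hi.2⟩
    have hfill : ∀ u ∈ dgF n lam, σ u ∈ Finset.Icc 1 n := by
      rintro ⟨i, j⟩ hu
      have hu' := mem_dgF'.1 hu
      simp only at hu'
      have := hanti i n hu'.1.1 hu'.1.2 le_rfl
      obtain ⟨j, rfl⟩ : ∃ k, j = k + 1 := ⟨j - 1, by omega⟩
      have hj : j + 1 ∈ Finset.Icc 1 (lam n) := Finset.mem_Icc.2 (by omega)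
      have h1 := hI j
      simp only [hj, dif_pos] at h1
      have h2 : σ (i, j + 1) ∈ p (j + 1) hj := by
        rw [← h1]
        exact Finset.mem_image_of_mem (fun i => σ (i, j + 1)) (mem_rowF.2 ⟨hu'.1, hu'.2.2⟩)
      exact (Finset.mem_powersetCard.1 (hp _ hj)).1 h2
    refine ⟨fun u => σ u.1, ?_, ?_⟩
    · rw [Finset.mem_filter, appropriate_iff hanti]
      refine ⟨?_, ?_, ?_⟩
      · rw [Fintype.mem_piFinset]
        exact fun u => hfill u.1 u.2
      · intro u hu
        rw [hext u hu]
        exact Finset.mem_Icc.1 (hfill u hu)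
      · rw [rowCond_iff] at hσ ⊢
        intro j i hi i' hi' hlt
        have hA : aug (ext n lam fun u => σ u.1) (i, j) = aug σ (i, j) := by
          unfold aug
          split_ifs with h
          · rfl
          · refine hext _ (mem_dgF'.2 ?_)
            rw [mem_rowF] at hi
            simp only at h ⊢
            omega
        rw [hA, hext _ (hrow' hi), hext _ (hrow' hi')]
        exact hσ j i hi i' hi' hlt
    · funext j hj
      obtain ⟨j, rfl⟩ : ∃ k, j = k + 1 := ⟨j - 1, by have := (Finset.mem_Icc.1 hj).1; omega⟩
      have h1 := hI j
      simp only [hj, dif_pos] at h1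
      rw [← h1]
      exact Finset.image_congr fun i hi => hext _ (hrow hj hi)
  · intro f hf
    rw [Finset.mem_filter, appropriate_iff hanti] at hf
    rw [prod_dgF hn hanti, ← Finset.prod_attach]
    refine Finset.prod_congr rfl ?_
    rintro ⟨j, hj⟩ _
    obtain ⟨j, rfl⟩ : ∃ k, j = k + 1 := ⟨j - 1, by have := (Finset.mem_Icc.1 hj).1; omega⟩
    exact (Finset.prod_image (hinj f hf.2.2 j)).symm

/-- The variable with one-based index. -/
noncomputable def yvar (n k : ℕ) : MvPolynomial (Fin n) ℤ :=
  if h : k - 1 < n then MvPolynomial.X ⟨k - 1, h⟩ else 1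

lemma yvar_succ (n : ℕ) (i : Fin n) : yvar n ((i : ℕ) + 1) = MvPolynomial.X i := by
  simp [yvar]

/-- The embedding `i ↦ i + 1`. -/
def embF (n : ℕ) : Fin n ↪ ℕ := ⟨fun i => (i : ℕ) + 1, fun i j h => by
  simp only [Nat.add_right_cancel_iff] at h; exact Fin.ext h⟩

lemma Icc_eq_map (n : ℕ) : Finset.Icc 1 n = (Finset.univ : Finset (Fin n)).map (embF n) := by
  ext k
  have he : ∀ i : Fin n, embF n i = (i : ℕ) + 1 := fun _ => rfl
  simp only [Finset.mem_Icc, Finset.mem_map, Finset.mem_univ, true_and, he]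
  constructor
  · intro h
    exact ⟨⟨k - 1, by omega⟩, Nat.sub_add_cancel h.1⟩
  · rintro ⟨i, rfl⟩
    omega

lemma esymm_eq (n r : ℕ) : MvPolynomial.esymm (Fin n) ℤ r =
    ∑ S ∈ Finset.powersetCard r (Finset.Icc 1 n), ∏ k ∈ S, yvar n k := by
  rw [Icc_eq_map, Finset.powersetCard_map, Finset.sum_map]
  unfold MvPolynomial.esymm
  refine Finset.sum_congr rfl fun S _ => ?_
  simp only [Finset.mapEmbedding, RelEmbedding.coe_toEmbedding, OrderEmbedding.coe_ofMapLEIff]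
  rw [Finset.prod_map]
  exact Finset.prod_congr rfl fun i _ => (yvar_succ n i).symm

lemma monomial_eq (n : ℕ) (D : Finset (ℕ × ℕ)) (σ : ℕ × ℕ → ℕ)
    (h : ∀ u ∈ D, σ u ∈ Finset.Icc 1 n) :
    ∏ i : Fin n, (MvPolynomial.X i : MvPolynomial (Fin n) ℤ) ^
      (D.filter fun u => σ u = (i : ℕ) + 1).card = ∏ u ∈ D, yvar n (σ u) := by
  rw [← Finset.prod_fiberwise_of_maps_to h, Icc_eq_map, Finset.prod_map]
  refine Finset.prod_congr rfl fun i _ => ?_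
  rw [Finset.prod_congr rfl (g := fun _ => (MvPolynomial.X i : MvPolynomial (Fin n) ℤ)),
    Finset.prod_const]
  · rfl
  · intro u hu
    rw [(Finset.mem_filter.1 hu).2]
    exact yvar_succ n i

end CO


open CO in
open Classical in
/-- Corollary: `E_λ(x; 1, ∞)` is a product of fundamental
characters. For antidominant `λ`, the sum of the monomials `x^{k(σ)}` over all
appropriate fillings `σ` of `dg'(λ)` equals `∏_{j=1}^{λ_n} e_{r_j}(x_1, …, x_n)`,
where `r_j` is the number of boxes in the `j`-th row. -/
theorem sum_appropriate_eq_prod_esymm (n : ℕ) (hn : 1 ≤ n) (lam : ℕ → ℕ)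
    (hanti : Antidominant n lam) :
    ∑ f ∈ (Fintype.piFinset fun _ : {u // u ∈ dgF n lam} => Finset.Icc 1 n).filter
        fun f => Appropriate n lam (ext n lam f),
      ∏ i : Fin n,
        (MvPolynomial.X i : MvPolynomial (Fin n) ℤ) ^
          ((dgF n lam).filter fun u => ext n lam f u = (i : ℕ) + 1).card
    = ∏ j ∈ Finset.Icc 1 (lam n),
        MvPolynomial.esymm (Fin n) ℤ ((Finset.Icc 1 n).filter fun i => j ≤ lam i).card := by
  rw [Finset.prod_congr rfl fun j _ => esymm_eq n _]
  refine Eq.trans ?_ (main_sum n hn lam hanti (yvar n))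
  refine Finset.sum_congr rfl fun f hf => ?_
  have hf' := (Finset.mem_filter.1 hf).2.1
  rw [← monomial_eq n (dgF n lam) (ext n lam f) fun u hu => Finset.mem_Icc.2 (hf' u hu)]
end

section
/- Let μ be an antidominant composition with exactly s ≥ 1 nonzero parts and let a = (a_{n−s+1},…,a_n) be pairwise distinct elements of {1,…,n}. Suppose μ_j = μ_{j+1} for some index j with n−s+1 ≤ j ≤ n−1, and let a' be obtained from a by interchanging the entries a_j and a_{j+1}. Then c_a^μ(k) = c_{a'}^μ(k) for every k ∈ ℤ_{≥0}^n. -/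
open Finset

namespace CO

/-- The statistic `asc(τ) = Σ (l(u) + 1)` over boxes `u = (i, j)` with `j ≥ 2` and
`τ(u) < τ(d(u))`. -/
def ascStat (n : ℕ) (mu : ℕ → ℕ) (τ : ℕ × ℕ → ℕ) : ℕ :=
  ∑ u ∈ (dgF n mu).filter fun u => 2 ≤ u.2 ∧ τ u < τ (dbox u), (mu u.1 - u.2 + 1)

/-- The greedy rule (iii): for boxes in rows `≥ 2`, with `S = τ(arm(u)) ∪ {τ(u)}`,
`τ(u)` is the minimum of `{x ∈ S : x ≥ τ(d(u))}` if nonempty, and `min S` otherwise. -/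
def GreedyRule (n : ℕ) (mu : ℕ → ℕ) (τ : ℕ × ℕ → ℕ) : Prop :=
  ∀ u ∈ dgF n mu, 2 ≤ u.2 →
    (({x ∈ τ '' ↑(armF n mu u) ∪ {τ u} | τ (dbox u) ≤ x}.Nonempty →
        τ u = sInf {x ∈ τ '' ↑(armF n mu u) ∪ {τ u} | τ (dbox u) ≤ x}) ∧
      (¬ {x ∈ τ '' ↑(armF n mu u) ∪ {τ u} | τ (dbox u) ≤ x}.Nonempty →
        τ u = sInf (τ '' ↑(armF n mu u) ∪ {τ u})))

/-- Conditions (i)–(iv) on the fillings `τ` counted by `c_a^μ(k)`. -/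
def CCond (n : ℕ) (mu : ℕ → ℕ) (a : ℕ → ℕ) (k : ℕ → ℕ) (τ : ℕ × ℕ → ℕ) : Prop :=
  (∀ u ∈ dgF n mu, 1 ≤ τ u ∧ τ u ≤ n) ∧
    (∀ j, (j, 1) ∈ dgF n mu → τ (j, 1) = a j) ∧
    (∀ u ∈ dgF n mu, ∀ v ∈ dgF n mu, Attack u v → τ u ≠ τ v) ∧
    GreedyRule n mu τ ∧
    ∀ i, 1 ≤ i → i ≤ n → ((dgF n mu).filter fun u => τ u = i).card = k i

open Classical in
/-- The coefficient `c_a^μ(k) ∈ ℤ[q]`: the generating function `Σ_τ q^{asc(τ)}`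
over fillings satisfying (i)–(iv). -/
noncomputable def cCoef (n : ℕ) (mu : ℕ → ℕ) (a : ℕ → ℕ) (k : ℕ → ℕ) : Polynomial ℤ :=
  ∑ f ∈ (Fintype.piFinset fun _ : {u // u ∈ dgF n mu} => Finset.Icc 1 n).filter
      fun f => CCond n mu a k (ext n mu f),
    Polynomial.X ^ ascStat n mu (ext n mu f)

end CO

namespace CO

/-- `p` is weakly before `s` in the cyclic order starting at `x`. -/
def CycLE (x p s : ℕ) : Prop := (x ≤ p ∧ (x ≤ s → p ≤ s)) ∨ (p < x ∧ s < x ∧ p ≤ s)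

/-- Interchange of the column indices `j` and `j + 1`. -/
def sw (j i : ℕ) : ℕ := if i = j then j + 1 else if i = j + 1 then j else i

/-- The columns `j`, `j + 1` do not merge in rows `2, …, r`. -/
def NoMerge (j : ℕ) (τ : ℕ × ℕ → ℕ) (r : ℕ) : Prop :=
  ∀ r', 1 ≤ r' → r' + 1 ≤ r → CycLE (τ (j, r')) (τ (j, r' + 1)) (τ (j + 1, r' + 1))

open Classical in
/-- The involution: swap the two columns below the first merging row. -/
noncomputable def Phi (j : ℕ) (τ : ℕ × ℕ → ℕ) : ℕ × ℕ → ℕ :=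
  fun u => if NoMerge j τ u.2 then τ (sw j u.1, u.2) else τ u

theorem mem_dgF (n : ℕ) (mu : ℕ → ℕ) (i r : ℕ) :
    (i, r) ∈ dgF n mu ↔ 1 ≤ i ∧ i ≤ n ∧ 1 ≤ r ∧ r ≤ mu i := by
  simp only [dgF, Finset.mem_biUnion, Finset.mem_image, Finset.mem_Icc, Prod.mk.injEq]
  constructor
  · rintro ⟨a, ha, b, hb, rfl, rfl⟩
    exact ⟨ha.1, ha.2, hb.1, hb.2⟩
  · rintro ⟨h1, h2, h3, h4⟩
    exact ⟨i, ⟨h1, h2⟩, r, ⟨h3, h4⟩, rfl, rfl⟩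

theorem sw_sw (j i : ℕ) : sw j (sw j i) = i := by
  unfold sw; grind

theorem mem_armF (n : ℕ) (mu : ℕ → ℕ) (h : Antidominant n mu) (i r : ℕ)
    (hu : (i, r) ∈ dgF n mu) (hr : 2 ≤ r) (v : ℕ × ℕ) :
    v ∈ armF n mu (i, r) ↔ v ∈ dgF n mu ∧ v.1 < i ∧ v.2 = r := by
  obtain ⟨a, b⟩ := v
  rw [mem_dgF] at hu
  simp only [armF, augF, Finset.mem_union, Finset.mem_filter, mem_dgF, Finset.mem_image,
    Finset.mem_Icc, Prod.mk.injEq]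
  constructor
  · rintro (⟨h1, h2, h3, h4⟩ | ⟨h1, h2, h3, h4⟩)
    · exact ⟨h1, h2, h3⟩
    · exfalso
      have : a ≤ n := by
        rcases h1 with h1 | ⟨c, h1, h5, h6⟩
        · exact h1.2.1
        · omega
      have := h i a hu.1 h2.le this
      omega
  · rintro ⟨h1, h2, h3⟩
    exact Or.inl ⟨h1, h2, h3, h a i h1.1 h2.le hu.2.1⟩

theorem rule_iff (A : Set ℕ) (d p : ℕ) :
    (({x ∈ A ∪ {p} | d ≤ x}.Nonempty → p = sInf {x ∈ A ∪ {p} | d ≤ x}) ∧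
      (¬ {x ∈ A ∪ {p} | d ≤ x}.Nonempty → p = sInf (A ∪ {p}))) ↔
    ∀ s ∈ A, CycLE d p s := by
  constructor
  · rintro ⟨h1, h2⟩ s hs
    by_cases hne : {x ∈ A ∪ {p} | d ≤ x}.Nonempty
    · have hp := h1 hne
      have hm := Nat.sInf_mem hne
      rw [← hp] at hm
      refine Or.inl ⟨hm.2, fun hx => ?_⟩
      rw [hp]
      exact Nat.sInf_le ⟨Or.inl hs, hx⟩
    · have hp := h2 hne
      refine Or.inr ⟨?_, ?_, ?_⟩
      · by_contra hc
        exact hne ⟨p, Or.inr rfl, not_lt.1 hc⟩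
      · by_contra hc
        exact hne ⟨s, Or.inl hs, not_lt.1 hc⟩
      · rw [hp]
        exact Nat.sInf_le (Or.inl hs)
  · intro h
    constructor
    · intro hne
      have hd : d ≤ p := by
        obtain ⟨x, hx | hx, hdx⟩ := hne
        · have := h x hx
          unfold CycLE at this
          omega
        · rw [Set.mem_singleton_iff] at hx
          omega
      refine le_antisymm ?_ (Nat.sInf_le ⟨Or.inr rfl, hd⟩)
      obtain ⟨hx | hx, hdx⟩ := Nat.sInf_mem hne
      · have := h _ hx
        unfold CycLE at this
        omega
      · rw [Set.mem_singleton_iff] at hx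
        exact hx.ge
    · intro hne
      have hd : p < d := by
        by_contra hc
        exact hne ⟨p, Or.inr rfl, not_lt.1 hc⟩
      refine le_antisymm ?_ (Nat.sInf_le (Or.inr rfl))
      obtain hx | hx := Nat.sInf_mem (s := A ∪ {p}) ⟨p, Or.inr rfl⟩
      · have := h _ hx
        unfold CycLE at this
        omega
      · rw [Set.mem_singleton_iff] at hx
        exact hx.ge

theorem greedy_iff (n : ℕ) (mu : ℕ → ℕ) (h : Antidominant n mu) (τ : ℕ × ℕ → ℕ) :
    GreedyRule n mu τ ↔ ∀ i i' r, 1 ≤ r → (i, r + 1) ∈ dgF n mu → (i', r + 1) ∈ dgF n mu →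
      i' < i → CycLE (τ (i, r)) (τ (i, r + 1)) (τ (i', r + 1)) := by
  unfold GreedyRule
  simp only [rule_iff]
  constructor
  · intro H i i' r hr hi hi' hlt
    refine H (i, r + 1) hi (by simp; omega) _ ⟨(i', r + 1), ?_, rfl⟩
    rw [Finset.mem_coe, mem_armF n mu h _ _ hi (by omega)]
    exact ⟨hi', hlt, rfl⟩
  · rintro H ⟨i, r⟩ hu hr s ⟨⟨i', r'⟩, hv, rfl⟩
    rw [Finset.mem_coe, mem_armF n mu h _ _ hu hr] at hv
    obtain ⟨hv, hlt, rfl⟩ := hv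
    obtain ⟨r, rfl⟩ : ∃ t, r' = t + 1 := ⟨r' - 1, by simp at hr; omega⟩
    exact H i i' r (by simp at hr; omega) hu hv hlt

theorem noMerge_succ (j : ℕ) (τ : ℕ × ℕ → ℕ) (r : ℕ) (hr : 1 ≤ r) :
    NoMerge j τ (r + 1) ↔
      NoMerge j τ r ∧ CycLE (τ (j, r)) (τ (j, r + 1)) (τ (j + 1, r + 1)) := by
  constructor
  · intro h
    exact ⟨fun r' h1 h2 => h r' h1 (by omega), h r hr le_rfl⟩
  · rintro ⟨h1, h2⟩ r' h3 h4
    rcases Nat.lt_or_ge r' r with h5 | h5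
    · exact h1 r' h3 (by omega)
    · obtain rfl : r' = r := by omega
      exact h2

theorem noMerge_one (j : ℕ) (τ : ℕ × ℕ → ℕ) : NoMerge j τ 1 := by
  intro r' h1 h2
  omega

theorem cyc_total {x p q : ℕ} (h : ¬ CycLE x p q) : CycLE x q p := by
  unfold CycLE at *; omega

theorem cyc_trans {x p q s : ℕ} (h : CycLE x p q) (h' : CycLE x q s) : CycLE x p s := by
  unfold CycLE at *; omega

theorem cyc_merge {x y p q s : ℕ} (h1 : ¬ CycLE x p q) (h2 : CycLE x p s)
    (h3 : CycLE y q p) (h4 : CycLE y q s) : CycLE y p s := by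
  unfold CycLE at *; omega

theorem cyc_antisymm {x p q : ℕ} (h : CycLE x p q) (h' : CycLE x q p) : p = q := by
  unfold CycLE at *; omega

theorem sum_swap_eq (n : ℕ) (mu : ℕ → ℕ) (j : ℕ) 
    (hsw : ∀ i r, (i, r) ∈ dgF n mu → (sw j i, r) ∈ dgF n mu) (f g : ℕ × ℕ → ℕ)
    (h : ∀ i r, (i, r) ∈ dgF n mu → f (i, r) + f (sw j i, r) = g (i, r) + g (sw j i, r)) :
    ∑ u ∈ dgF n mu, f u = ∑ u ∈ dgF n mu, g u := by
  have key : ∀ f : ℕ × ℕ → ℕ,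
      ∑ u ∈ dgF n mu, f (sw j u.1, u.2) = ∑ u ∈ dgF n mu, f u := by
    intro f
    refine Finset.sum_nbij' (fun u => (sw j u.1, u.2)) (fun u => (sw j u.1, u.2)) ?_ ?_ ?_ ?_ ?_
    · rintro ⟨i, r⟩ hu
      exact hsw i r hu
    · rintro ⟨i, r⟩ hu
      exact hsw i r hu
    · rintro ⟨i, r⟩ hu
      simp [sw_sw]
    · rintro ⟨i, r⟩ hu
      simp [sw_sw]
    · intros
      rfl
  have h2 : ∑ u ∈ dgF n mu, (f u + f (sw j u.1, u.2)) =
      ∑ u ∈ dgF n mu, (g u + g (sw j u.1, u.2)) :=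
    Finset.sum_congr rfl fun u hu => h u.1 u.2 hu
  rw [Finset.sum_add_distrib, Finset.sum_add_distrib, key f, key g] at h2
  omega

theorem phi_pos {j : ℕ} {τ : ℕ × ℕ → ℕ} {r : ℕ} (h : NoMerge j τ r) (i : ℕ) :
    Phi j τ (i, r) = τ (sw j i, r) := by
  simp [Phi, h]

theorem phi_neg {j : ℕ} {τ : ℕ × ℕ → ℕ} {r : ℕ} (h : ¬ NoMerge j τ r) (i : ℕ) :
    Phi j τ (i, r) = τ (i, r) := by
  simp [Phi, h]

theorem sw_left (j : ℕ) : sw j j = j + 1 := by simp [sw]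

theorem sw_right (j : ℕ) : sw j (j + 1) = j := by simp [sw]

theorem sw_other {j i : ℕ} (h : i ≠ j) (h' : i ≠ j + 1) : sw j i = i := by simp [sw, h, h']

theorem main_lemma (n : ℕ) (mu : ℕ → ℕ) (hanti : Antidominant n mu) (a k : ℕ → ℕ) (j : ℕ)
    (hj1 : 1 ≤ j) (hj2 : j + 1 ≤ n) (heq : mu j = mu (j + 1)) (τ : ℕ × ℕ → ℕ)
    (hτ : CCond n mu a k τ) (hz : ∀ u, u ∉ dgF n mu → τ u = 0) :
    CCond n mu (fun i => a (sw j i)) k (Phi j τ) ∧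
    (∀ u, u ∉ dgF n mu → Phi j τ u = 0) ∧
    Phi j (Phi j τ) = τ ∧
    ascStat n mu (Phi j τ) = ascStat n mu τ := by
  obtain ⟨hrange, hbase, hatt, hgr, hcount⟩ := hτ
  rw [greedy_iff n mu hanti] at hgr
  have hsw : ∀ i r, (i, r) ∈ dgF n mu → (sw j i, r) ∈ dgF n mu := by
    intro i r
    simp only [mem_dgF]
    unfold sw
    intro h
    split_ifs with h1 h2
    · subst h1; omega
    · subst h2; omega
    · exact h
  have hdown : ∀ i r, 1 ≤ r → (i, r + 1) ∈ dgF n mu → (i, r) ∈ dgF n mu := by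
    intro i r
    simp only [mem_dgF]
    omega
  have hrow : ∀ i i' r, (i, r) ∈ dgF n mu → (i', r) ∈ dgF n mu → i ≠ i' →
      τ (i, r) ≠ τ (i', r) := by
    intro i i' r h h' hne
    exact hatt _ h _ h' ⟨by simp [hne], Or.inl rfl⟩
  have hjj : ∀ r, (j, r) ∈ dgF n mu → (j + 1, r) ∈ dgF n mu := by
    intro r h
    simpa [sw_left] using hsw _ _ h
  have hjj' : ∀ r, (j + 1, r) ∈ dgF n mu → (j, r) ∈ dgF n mu := by
    intro r h
    simpa [sw_right] using hsw _ _ h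
  -- greedy rule for the image
  have hgr' : ∀ i i' r, 1 ≤ r → (i, r + 1) ∈ dgF n mu → (i', r + 1) ∈ dgF n mu →
      i' < i → CycLE (Phi j τ (i, r)) (Phi j τ (i, r + 1)) (Phi j τ (i', r + 1)) := by
    intro i i' r hr hi hi' hlt
    have hns := noMerge_succ j τ r hr
    by_cases hM : NoMerge j τ (r + 1)
    · have hM' := (hns.1 hM)
      rw [phi_pos hM, phi_pos hM, phi_pos hM'.1]
      by_cases hc : i' = j ∧ i = j + 1
      · obtain ⟨rfl, rfl⟩ := hc
        rw [sw_left, sw_right]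
        exact hM'.2
      · refine hgr _ _ r hr (hsw _ _ hi) (hsw _ _ hi') ?_
        unfold sw
        split_ifs <;> omega
    · rw [phi_neg hM, phi_neg hM]
      by_cases hM1 : NoMerge j τ r
      · rw [phi_pos hM1]
        have hx : ¬ CycLE (τ (j, r)) (τ (j, r + 1)) (τ (j + 1, r + 1)) :=
          fun hc => hM (hns.2 ⟨hM1, hc⟩)
        by_cases h1 : i = j
        · subst h1
          rw [sw_left]
          have hi1 := hjj _ hi
          exact cyc_merge hx (hgr _ _ r hr hi hi' hlt) (hgr _ _ r hr hi1 hi (by omega))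
            (hgr _ _ r hr hi1 hi' (by omega))
        · by_cases h2 : i = j + 1
          · subst h2
            rw [sw_right]
            by_cases h3 : i' = j
            · subst h3
              exact cyc_total hx
            · exact cyc_trans (cyc_total hx) (hgr _ _ r hr (hjj' _ hi) hi' (by omega))
          · rw [sw_other h1 h2]
            exact hgr _ _ r hr hi hi' hlt
      · rw [phi_neg hM1]
        exact hgr _ _ r hr hi hi' hlt
  have hrow' : ∀ i i' r, (i, r) ∈ dgF n mu → (i', r) ∈ dgF n mu → i ≠ i' →
      Phi j τ (i, r) ≠ Phi j τ (i', r) := by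
    intro i i' r h h' hne
    by_cases hM : NoMerge j τ r
    · rw [phi_pos hM, phi_pos hM]
      refine hrow _ _ _ (hsw _ _ h) (hsw _ _ h') fun hc => hne ?_
      rw [← sw_sw j i, hc, sw_sw]
    · rw [phi_neg hM, phi_neg hM]
      exact hrow _ _ _ h h' hne
  have hcross : ∀ i i' r, (i, r + 1) ∈ dgF n mu → (i', r) ∈ dgF n mu → i < i' →
      Phi j τ (i, r + 1) ≠ Phi j τ (i', r) := by
    intro i i' r h h' hlt hc
    have hr : 1 ≤ r := ((mem_dgF _ _ _ _).1 h').2.2.1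
    have h2 : (i', r + 1) ∈ dgF n mu := by
      rw [mem_dgF] at h h' ⊢
      have := hanti i i' h.1 hlt.le h'.2.1
      omega
    have h3 := hgr' i' i r hr h2 h hlt
    have h4 := hrow' i i' (r + 1) h h2 hlt.ne
    unfold CycLE at h3
    omega
  have hasc : ascStat n mu (Phi j τ) = ascStat n mu τ := by
    unfold ascStat
    rw [Finset.sum_filter, Finset.sum_filter]
    apply sum_swap_eq n mu j hsw
    have hloc : ∀ r, (j, r + 1) ∈ dgF n mu → 1 ≤ r → ∀ c : ℕ,
        (if Phi j τ (j, r + 1) < Phi j τ (j, r) then c else 0) +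
          (if Phi j τ (j + 1, r + 1) < Phi j τ (j + 1, r) then c else 0) =
        (if τ (j, r + 1) < τ (j, r) then c else 0) +
          (if τ (j + 1, r + 1) < τ (j + 1, r) then c else 0) := by
      intro r h hr c
      have hns := noMerge_succ j τ r hr
      by_cases hM : NoMerge j τ (r + 1)
      · have hM' := (hns.1 hM)
        rw [phi_pos hM, phi_pos hM, phi_pos hM'.1, phi_pos hM'.1, sw_left, sw_right, add_comm]
      · rw [phi_neg hM, phi_neg hM]
        by_cases hM1 : NoMerge j τ r
        · rw [phi_pos hM1, phi_pos hM1, sw_left, sw_right]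
          have hx : ¬ CycLE (τ (j, r)) (τ (j, r + 1)) (τ (j + 1, r + 1)) :=
            fun hc => hM (hns.2 ⟨hM1, hc⟩)
          have hy := hgr _ _ r hr (hjj _ h) h (by omega)
          unfold CycLE at hx hy
          split_ifs <;> omega
        · rw [phi_neg hM1, phi_neg hM1]
    intro i r h
    by_cases hr2 : 2 ≤ r
    · obtain ⟨r, rfl⟩ : ∃ t, r = t + 1 := ⟨r - 1, by omega⟩
      simp only [dbox, hr2, true_and, Nat.add_sub_cancel]
      by_cases h1 : i = j
      · subst h1
        rw [sw_left, ← heq]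
        exact hloc r h (by omega) _
      · by_cases h2 : i = j + 1
        · subst h2
          rw [sw_right, ← heq, add_comm, hloc r (hjj' _ h) (by omega) _, add_comm]
        · have e : ∀ r, Phi j τ (i, r) = τ (i, r) := by
            intro r
            by_cases hM : NoMerge j τ r
            · rw [phi_pos hM, sw_other h1 h2]
            · rw [phi_neg hM]
          rw [sw_other h1 h2, e, e]
    · simp [hr2]
  have hM : ∀ r, 1 ≤ r → (j, r) ∈ dgF n mu → (NoMerge j (Phi j τ) r ↔ NoMerge j τ r) := by
    intro r hr
    induction r, hr using Nat.le_induction with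
    | base =>
      intro _
      exact iff_of_true (noMerge_one _ _) (noMerge_one _ _)
    | succ r hr ih =>
      intro h
      have ih := ih (hdown _ _ hr h)
      have hy := hgr _ _ r hr (hjj _ h) h (by omega)
      rw [noMerge_succ _ _ _ hr, ih]
      by_cases hM : NoMerge j τ (r + 1)
      · have hM' := (noMerge_succ _ _ _ hr).1 hM
        rw [phi_pos hM, phi_pos hM, phi_pos hM'.1, sw_left, sw_right]
        exact iff_of_true ⟨hM'.1, hy⟩ hM
      · refine iff_of_false ?_ hM
        rintro ⟨hM1, hc⟩
        rw [phi_neg hM, phi_neg hM, phi_pos hM1, sw_left] at hc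
        exact hrow _ _ _ h (hjj _ h) (by omega) (cyc_antisymm hc hy)
  have hz' : ∀ u, u ∉ dgF n mu → Phi j τ u = 0 := by
    rintro ⟨i, r⟩ hu
    by_cases hM : NoMerge j τ r
    · rw [phi_pos hM]
      apply hz
      intro hc
      have := hsw _ _ hc
      rw [sw_sw] at this
      exact hu this
    · rw [phi_neg hM]
      exact hz _ hu
  refine ⟨⟨?_, ?_, ?_, ?_, ?_⟩, hz', ?_, hasc⟩
  · rintro ⟨i, r⟩ hu
    by_cases hM : NoMerge j τ r
    · rw [phi_pos hM]
      exact hrange _ (hsw _ _ hu)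
    · rw [phi_neg hM]
      exact hrange _ hu
  · intro i hi
    rw [phi_pos (noMerge_one j τ)]
    exact hbase _ (hsw _ _ hi)
  · rintro ⟨i, r⟩ hu ⟨i', r'⟩ hv ⟨hne, h | h | h⟩
    · simp only at h
      subst h
      exact hrow' _ _ _ hu hv fun hc => hne (by rw [hc])
    · simp only at h
      obtain ⟨rfl, h⟩ := h
      exact hcross _ _ _ hu hv h
    · simp only at h
      obtain ⟨rfl, h⟩ := h
      exact (hcross _ _ _ hv hu h).symm
  · rw [greedy_iff n mu hanti]
    exact hgr'
  · intro c h1 h2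
    rw [← hcount c h1 h2, Finset.card_filter, Finset.card_filter]
    apply sum_swap_eq n mu j hsw
    intro i r h
    by_cases hM : NoMerge j τ r
    · rw [phi_pos hM, phi_pos hM, sw_sw, add_comm]
    · rw [phi_neg hM, phi_neg hM]
  · funext u
    obtain ⟨i, r⟩ := u
    by_cases hu : (i, r) ∈ dgF n mu
    · have hr : 1 ≤ r := ((mem_dgF _ _ _ _).1 hu).2.2.1
      by_cases hi : i ≠ j ∧ i ≠ j + 1
      · simp [Phi, sw_other hi.1 hi.2]
      · have hj : (j, r) ∈ dgF n mu := by
          by_cases h1 : i = j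
          · rwa [← h1]
          · have h2 : i = j + 1 := by omega
            exact hjj' _ (h2 ▸ hu)
        have := hM r hr hj
        by_cases hM2 : NoMerge j τ r
        · rw [phi_pos (this.2 hM2), phi_pos hM2, sw_sw]
        · rw [phi_neg fun hc => hM2 (this.1 hc), phi_neg hM2]
    · have : (sw j i, r) ∉ dgF n mu := fun hc => hu (by simpa [sw_sw] using hsw _ _ hc)
      rw [hz _ hu]
      by_cases hM2 : NoMerge j (Phi j τ) r
      · rw [phi_pos hM2, hz' _ this]
      · rw [phi_neg hM2, hz' _ hu]

theorem ext_restrict (n : ℕ) (mu : ℕ → ℕ) (τ : ℕ × ℕ → ℕ)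
    (hz : ∀ u, u ∉ dgF n mu → τ u = 0) :
    ext n mu (fun u => τ u.1) = τ := by
  funext u
  unfold ext
  split_ifs with h
  · rfl
  · exact (hz u h).symm

theorem ext_zero (n : ℕ) (mu : ℕ → ℕ) (f : {u // u ∈ dgF n mu} → ℕ) :
    ∀ u, u ∉ dgF n mu → ext n mu f u = 0 := by
  intro u h
  simp [ext, h]

theorem ext_apply (n : ℕ) (mu : ℕ → ℕ) (f : {u // u ∈ dgF n mu} → ℕ)
    (u : {u // u ∈ dgF n mu}) : ext n mu f u.1 = f u := by
  simp [ext]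

end CO

open CO in
/-- Proposition `transpositioncolumns`. If `μ_j = μ_{j+1}` for two
consecutive columns of the bottom row, interchanging the corresponding entries of
the bottom-row tuple `a` does not change `c_a^μ(k)`. -/
theorem c_transposition (n : ℕ) (hn : 1 ≤ n) (mu : ℕ → ℕ) (hanti : Antidominant n mu)
    (s : ℕ) (hs1 : 1 ≤ s) (hsn : s ≤ n)
    (hzero : ∀ i, 1 ≤ i → i ≤ n - s → mu i = 0) (hpos : 1 ≤ mu (n - s + 1))
    (a : ℕ → ℕ) (ha : ∀ j ∈ Finset.Icc (n - s + 1) n, a j ∈ Finset.Icc 1 n)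
    (hainj : ∀ j ∈ Finset.Icc (n - s + 1) n, ∀ j' ∈ Finset.Icc (n - s + 1) n,
      a j = a j' → j = j')
    (j : ℕ) (hj1 : n - s + 1 ≤ j) (hj2 : j ≤ n - 1) (heq : mu j = mu (j + 1))
    (a' : ℕ → ℕ)
    (ha' : a' = fun i => if i = j then a (j + 1) else if i = j + 1 then a j else a i)
    (k : ℕ → ℕ) :
    cCoef n mu a k = cCoef n mu a' k := by
  have hj0 : 1 ≤ j := by omega
  have hjn : j + 1 ≤ n := by omega
  have e1 : a' = fun i => a (sw j i) := by
    subst ha'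
    funext i
    unfold sw
    split_ifs <;> rfl
  have e2 : a = fun i => a' (sw j i) := by
    rw [e1]
    funext i
    simp only [sw_sw]
  have key : ∀ b b' : ℕ → ℕ, b' = (fun i => b (sw j i)) →
      ∀ f : {u // u ∈ dgF n mu} → ℕ, CCond n mu b k (ext n mu f) →
        CCond n mu b' k (ext n mu fun u => Phi j (ext n mu f) u.1) ∧
        (∀ u : {u // u ∈ dgF n mu}, Phi j (ext n mu fun u => Phi j (ext n mu f) u.1) u.1 = f u) ∧
        ascStat n mu (ext n mu fun u => Phi j (ext n mu f) u.1) = ascStat n mu (ext n mu f) := by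
    intro b b' hb f hf
    obtain ⟨h1, h2, h3, h4⟩ := main_lemma n mu hanti b k j hj0 hjn heq _ hf (ext_zero n mu f)
    rw [ext_restrict n mu _ h2, h3, hb]
    exact ⟨h1, ext_apply n mu f, h4⟩
  have mem : ∀ b b' : ℕ → ℕ, b' = (fun i => b (sw j i)) →
      ∀ f : {u // u ∈ dgF n mu} → ℕ, CCond n mu b k (ext n mu f) →
        ∀ u : {u // u ∈ dgF n mu}, 1 ≤ Phi j (ext n mu f) u.1 ∧ Phi j (ext n mu f) u.1 ≤ n := by
    intro b b' hb f hf u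
    have := (key b b' hb f hf).1.1 u.1 u.2
    rwa [ext_apply] at this
  classical
  unfold cCoef
  refine Finset.sum_nbij' (fun f u => Phi j (ext n mu f) u.1)
    (fun f u => Phi j (ext n mu f) u.1) ?_ ?_ ?_ ?_ ?_
  · intro f hf
    rw [Finset.mem_filter] at hf ⊢
    refine ⟨?_, (key a a' e1 f hf.2).1⟩
    rw [Fintype.mem_piFinset]
    intro u
    rw [Finset.mem_Icc]
    exact mem a a' e1 f hf.2 u
  · intro f hf
    rw [Finset.mem_filter] at hf ⊢
    refine ⟨?_, (key a' a e2 f hf.2).1⟩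
    rw [Fintype.mem_piFinset]
    intro u
    rw [Finset.mem_Icc]
    exact mem a' a e2 f hf.2 u
  · intro f hf
    rw [Finset.mem_filter] at hf
    funext u
    exact (key a a' e1 f hf.2).2.1 u
  · intro f hf
    rw [Finset.mem_filter] at hf
    funext u
    exact (key a' a e2 f hf.2).2.1 u
  · intro f hf
    rw [Finset.mem_filter] at hf
    rw [(key a a' e1 f hf.2).2.2]
end
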